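/- Let m ≥ 1, n = 2m+1, and let A₁,…,Aₙ be pairwise commuting bounded self-adjoint operators on a complex Hilbert space H. Define the operator-valued function G(t) = t^{2m−1} ∫_{S^{2m}} cos(tω₁A₁)·cos(tω₂A₂)⋯cos(tωₙAₙ) dσ(ω) (a Bochner integral in the Banach space of bounded operators on H). Then G is m times differentiable in operator norm on (0,∞) and for every t > 0, cos(t·√(A₁²+⋯+Aₙ²)) = (1/(2(2π)^m)) · (D^{m−1}G)′(t). -/

import Mathlib

open MeasureTheory Real

/-- The operator `(Df)(t) = f'(t)/t` for functions with values in a real normed space. -/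
noncomputable def Dop {F : Type*} [NormedAddCommGroup F] [NormedSpace ℝ F]
    (f : ℝ → F) : ℝ → F := fun t => t⁻¹ • deriv f t

/-- `cos (s • T)` defined by its norm-convergent power series
`∑ (-1)^k s^(2k) T^(2k) / (2k)!`. -/
noncomputable def cosOp {H : Type*} [NormedAddCommGroup H] [InnerProductSpace ℂ H]
    (s : ℝ) (T : H →L[ℂ] H) : H →L[ℂ] H :=
  ∑' k : ℕ, (((-1:ℝ)^k * s^(2*k)) / (Nat.factorial (2*k) : ℝ)) • T^(2*k)

section Algebra

theorem List.prod_ofFn_smul {R : Type*} [Ring R] [Algebra ℝ R] :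
    ∀ {n : ℕ} (c : Fin n → ℝ) (f : Fin n → R),
      (List.ofFn fun i => c i • f i).prod = (∏ i, c i) • (List.ofFn f).prod
  | 0, _, _ => by simp
  | n + 1, c, f => by
    rw [List.ofFn_succ, List.prod_cons, List.prod_ofFn_smul, List.ofFn_succ, List.prod_cons,
      Fin.prod_univ_succ, smul_mul_smul_comm]

/-- A product of finitely many absolutely convergent series in a normed ring is an absolutely
convergent series indexed by tuples. -/
theorem summable_norm_and_hasSum_prod_ofFn {R : Type*} [NormedRing R] [CompleteSpace R] :
    ∀ {n : ℕ} (f : Fin n → ℕ → R), (∀ i, Summable fun k => ‖f i k‖) →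
      Summable (fun k : Fin n → ℕ => ‖(List.ofFn fun i => f i (k i)).prod‖) ∧
      HasSum (fun k : Fin n → ℕ => (List.ofFn fun i => f i (k i)).prod)
        (List.ofFn fun i => ∑' k, f i k).prod
  | 0, f, _ => by
    refine ⟨Summable.of_finite, ?_⟩
    simp
  | n + 1, f, hf => by
    obtain ⟨hs, hh⟩ := summable_norm_and_hasSum_prod_ofFn (fun i => f i.succ) fun i => hf i.succ
    have key : ∀ p : ℕ × (Fin n → ℕ),
        (List.ofFn fun i => f i (Fin.consEquiv (fun _ : Fin (n + 1) => ℕ) p i)).prod =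
          f 0 p.1 * (List.ofFn fun i : Fin n => f i.succ (p.2 i)).prod := by
      intro p
      rw [List.ofFn_succ, List.prod_cons]
      simp [Fin.consEquiv]
    constructor
    · rw [← (Fin.consEquiv fun _ : Fin (n + 1) => ℕ).summable_iff]
      have := (hf 0).mul_norm (f := f 0)
        (g := fun k : Fin n → ℕ => (List.ofFn fun i : Fin n => f i.succ (k i)).prod) hs
      refine this.congr fun p => ?_
      rw [Function.comp_apply, key]
    · have h0 : Summable fun p : ℕ × (Fin n → ℕ) =>
          f 0 p.1 * (List.ofFn fun i : Fin n => f i.succ (p.2 i)).prod :=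
        summable_mul_of_summable_norm (f := f 0)
          (g := fun k : Fin n → ℕ => (List.ofFn fun i : Fin n => f i.succ (k i)).prod) (hf 0) hs
      have := (hf 0).of_norm.hasSum.mul (f := f 0)
        (g := fun k : Fin n → ℕ => (List.ofFn fun i : Fin n => f i.succ (k i)).prod) hh h0
      rw [← (Fin.consEquiv fun _ : Fin (n + 1) => ℕ).hasSum_iff, List.ofFn_succ, List.prod_cons]
      rwa [← funext key] at this

theorem sum_antidiagonalTuple_succ {M : Type*} [AddCommMonoid M] (n j : ℕ)
    (f : (Fin (n + 1) → ℕ) → M) :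
    ∑ x ∈ Finset.Nat.antidiagonalTuple (n + 1) j, f x =
      ∑ p ∈ Finset.HasAntidiagonal.antidiagonal j, ∑ x ∈ Finset.Nat.antidiagonalTuple n p.2,
        f (Fin.cons p.1 x) := by
  rw [Finset.sum_sigma']
  refine Finset.sum_bij' (fun x _ => ⟨(x 0, ∑ i : Fin n, x i.succ), fun i => x i.succ⟩)
    (fun y _ => Fin.cons y.1.1 y.2) ?_ ?_ ?_ ?_ ?_
  · intro x hx
    simp_all [Finset.Nat.mem_antidiagonalTuple, Fin.sum_univ_succ]
  · rintro ⟨⟨a, b⟩, y⟩ hy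
    simp_all [Finset.Nat.mem_antidiagonalTuple, Fin.sum_univ_succ]
  · intro x _
    exact Fin.cons_self_tail x
  · rintro ⟨⟨a, b⟩, y⟩ hy
    simp_all [Finset.Nat.mem_antidiagonalTuple]
  · intro x _
    exact congrArg f (Fin.cons_self_tail x).symm

/-- The multinomial theorem for pairwise commuting elements, with divided powers. -/
theorem sum_antidiagonalTuple_prod_ofFn_pow {R : Type*} [Ring R] [Algebra ℝ R] :
    ∀ {n : ℕ} (B : Fin n → R) (_ : ∀ i j, Commute (B i) (B j)) (j : ℕ),
      ∑ k ∈ Finset.Nat.antidiagonalTuple n j,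
        (List.ofFn fun i => ((k i).factorial : ℝ)⁻¹ • B i ^ k i).prod =
          (j.factorial : ℝ)⁻¹ • (∑ i, B i) ^ j
  | 0, B, _, 0 => by simp
  | 0, B, _, j + 1 => by simp
  | n + 1, B, hB, j => by
    rw [sum_antidiagonalTuple_succ, Fin.sum_univ_succ,
      (Commute.sum_right _ _ _ fun i _ => hB 0 i.succ).add_pow', Finset.smul_sum]
    refine Finset.sum_congr rfl fun p hp => ?_
    have hpj := Finset.HasAntidiagonal.mem_antidiagonal.mp hp
    simp only [List.ofFn_succ, List.prod_cons, Fin.cons_zero, Fin.cons_succ]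
    rw [← Finset.mul_sum, sum_antidiagonalTuple_prod_ofFn_pow (fun i => B i.succ)
      (fun i j => hB _ _), smul_mul_smul_comm, ← Nat.cast_smul_eq_nsmul ℝ, smul_smul]
    congr 1
    subst hpj
    rw [Nat.cast_add_choose]
    field_simp

end Algebra

section Moments

open Set

theorem Real.Gamma_nat_add_half_eq_factorial (k : ℕ) :
    Real.Gamma (k + 1 / 2) = (2 * k).factorial * √π / (4 ^ k * k.factorial) := by
  induction k with
  | zero => simpa using Real.Gamma_one_half_eq
  | succ k ih =>
    have h : ((k + 1 : ℕ) : ℝ) + 1 / 2 = (k + 1 / 2) + 1 := by push_cast; ring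
    rw [h, Real.Gamma_add_one (by positivity), ih, show 2 * (k + 1) = 2 * k + 1 + 1 by ring,
      Nat.factorial_succ, Nat.factorial_succ, Nat.factorial_succ]
    push_cast
    field_simp
    ring

theorem integral_Ioi_pow_mul_exp_neg_sq (q : ℕ) :
    ∫ x in Ioi (0 : ℝ), x ^ q * Real.exp (-x ^ 2) = Real.Gamma ((q + 1) / 2) / 2 := by
  have h := integral_rpow_mul_exp_neg_rpow (p := 2) (q := q) (by norm_num)
    (by have : (0 : ℝ) ≤ q := q.cast_nonneg
        linarith)
  simp only [Real.rpow_natCast, Real.rpow_ofNat] at h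
  rw [h]
  ring

theorem integral_pow_two_mul_mul_exp_neg_sq (k : ℕ) :
    ∫ x : ℝ, x ^ (2 * k) * Real.exp (-x ^ 2) = Real.Gamma (k + 1 / 2) := by
  have h := integral_comp_abs (f := fun x : ℝ => x ^ (2 * k) * Real.exp (-x ^ 2))
  simp only [sq_abs, pow_mul] at h
  simp only [pow_mul]
  rw [h]
  simp only [← pow_mul]
  rw [integral_Ioi_pow_mul_exp_neg_sq]
  push_cast
  rw [mul_div_cancel₀ _ two_ne_zero]
  congr 1
  ring

/-- Integration in polar coordinates for products of an angular and a radial function. -/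
theorem integral_polar_mul {E : Type*} [NormedAddCommGroup E] [NormedSpace ℝ E]
    [FiniteDimensional ℝ E] [Nontrivial E] [MeasurableSpace E] [BorelSpace E] (μ : Measure E)
    [μ.IsAddHaarMeasure] (f : E → ℝ) (g : Metric.sphere (0 : E) 1 → ℝ) (h : ℝ → ℝ)
    (hf : ∀ (r : ℝ) (ω : Metric.sphere (0 : E) 1), 0 < r → f (r • (ω : E)) = g ω * h r) :
    ∫ x, f x ∂μ = (∫ ω, g ω ∂μ.toSphere) *
      ∫ r in Ioi (0 : ℝ), r ^ (Module.finrank ℝ E - 1) * h r :=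
  calc
    ∫ x, f x ∂μ = ∫ x : ({(0)}ᶜ : Set E), f x.1 ∂(μ.comap (↑)) := by
      rw [integral_subtype_comap (measurableSet_singleton _).compl fun x ↦ f x,
        restrict_compl_singleton]
    _ = ∫ p, g p.1 * h p.2 ∂μ.toSphere.prod (.volumeIoiPow (Module.finrank ℝ E - 1)) := by
      rw [← μ.measurePreserving_homeomorphUnitSphereProd.integral_comp
        (Homeomorph.measurableEmbedding _) fun p => g p.1 * h p.2]
      refine integral_congr_ae (.of_forall fun x => ?_)
      have hx := hf (homeomorphUnitSphereProd E x).2 (homeomorphUnitSphereProd E x).1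
        (homeomorphUnitSphereProd E x).2.2
      rw [← homeomorphUnitSphereProd_symm_apply_coe, Homeomorph.symm_apply_apply] at hx
      exact hx
    _ = (∫ ω, g ω ∂μ.toSphere) *
        ∫ x : Ioi (0 : ℝ), h x ∂.volumeIoiPow (Module.finrank ℝ E - 1) :=
      integral_prod_mul g fun r : Ioi (0 : ℝ) => h r
    _ = _ := by
      congr 1
      simp only [Measure.volumeIoiPow, ENNReal.ofReal]
      rw [integral_withDensity_eq_integral_smul,
        integral_subtype_comap measurableSet_Ioi
          fun a ↦ Real.toNNReal (a ^ (Module.finrank ℝ E - 1)) • h a,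
        setIntegral_congr_fun measurableSet_Ioi fun x hx ↦ ?_]
      · rw [NNReal.smul_def, Real.coe_toNNReal _ (pow_nonneg hx.out.le _), smul_eq_mul]
      · exact (measurable_subtype_coe.pow_const _).real_toNNReal

/-- The even monomial moments of the surface measure of the unit sphere. -/
theorem integral_sphere_prod_pow_two_mul {n : ℕ} (k : Fin (n + 1) → ℕ) :
    ∫ ω : Metric.sphere (0 : EuclideanSpace ℝ (Fin (n + 1))) 1,
        ∏ i, (ω : EuclideanSpace ℝ (Fin (n + 1))) i ^ (2 * k i)
        ∂((volume : Measure (EuclideanSpace ℝ (Fin (n + 1)))).toSphere) =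
      2 * (∏ i, Real.Gamma (k i + 1 / 2)) / Real.Gamma ((∑ i, k i : ℕ) + (n + 1) / 2) := by
  have h1 := integral_polar_mul (volume : Measure (EuclideanSpace ℝ (Fin (n + 1))))
    (fun x => ∏ i, (x i ^ (2 * k i) * Real.exp (-x i ^ 2)))
    (fun ω => ∏ i, (ω : EuclideanSpace ℝ (Fin (n + 1))) i ^ (2 * k i))
    (fun r => r ^ (2 * ∑ i, k i) * Real.exp (-r ^ 2)) (by
      intro r ω hr
      have hω : ∑ i, (ω : EuclideanSpace ℝ (Fin (n + 1))) i ^ 2 = 1 := by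
        rw [← EuclideanSpace.real_norm_sq_eq, norm_eq_of_mem_sphere ω, one_pow]
      simp only [PiLp.smul_apply, smul_eq_mul, mul_pow, Finset.prod_mul_distrib,
        Finset.prod_pow_eq_pow_sum, ← Finset.mul_sum, ← Real.exp_sum, Finset.sum_neg_distrib, hω]
      ring_nf)
  rw [← (PiLp.volume_preserving_toLp (Fin (n + 1))).integral_comp
    (MeasurableEquiv.toLp 2 _).measurableEmbedding] at h1
  rw [integral_fintype_prod_volume_eq_prod
    (f := fun i (v : ℝ) => v ^ (2 * k i) * Real.exp (-v ^ 2))] at h1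
  simp only [integral_pow_two_mul_mul_exp_neg_sq, ← mul_assoc, ← pow_add,
    finrank_euclideanSpace_fin, Nat.add_sub_cancel] at h1
  rw [integral_Ioi_pow_mul_exp_neg_sq] at h1
  have h2 : ((n + 2 * ∑ i, k i : ℕ) + 1 : ℝ) / 2 = (∑ i, k i : ℕ) + (n + 1) / 2 := by
    push_cast; ring
  rw [h2] at h1
  rw [h1]
  have : Real.Gamma ((∑ i, k i : ℕ) + (n + 1) / 2) ≠ 0 := (Real.Gamma_pos_of_pos (by positivity)).ne'
  field_simp

end Moments

section Series

open Set

variable {E : Type*} [NormedAddCommGroup E] [NormedSpace ℝ E]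

/-- A coefficient sequence whose power series has infinite radius of convergence. -/
def EntireCoeff (u : ℕ → E) : Prop := ∀ R : ℝ, 0 ≤ R → Summable fun j => R ^ j * ‖u j‖

theorem EntireCoeff.linear_smul {u : ℕ → E} (hu : EntireCoeff u) (p : ℕ) :
    EntireCoeff fun j => ((2 * j + p : ℕ) : ℝ) • u j := by
  intro R hR
  refine Summable.of_nonneg_of_le (fun j => by positivity) (fun j => ?_)
    ((hu (2 * R) (by positivity)).mul_left ((2 : ℝ) + p))
  rw [norm_smul, Real.norm_of_nonneg (by positivity)]
  have h1 : (j : ℝ) ≤ 2 ^ j := by exact_mod_cast (Nat.lt_two_pow_self (n := j)).le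
  have h2 : (1 : ℝ) ≤ 2 ^ j := one_le_pow₀ (by norm_num)
  have h3 : ((2 * j + p : ℕ) : ℝ) ≤ (2 + p) * 2 ^ j := by
    push_cast
    nlinarith [(Nat.cast_nonneg p : (0 : ℝ) ≤ p)]
  calc R ^ j * (((2 * j + p : ℕ) : ℝ) * ‖u j‖)
      ≤ R ^ j * (((2 + p) * 2 ^ j) * ‖u j‖) := by gcongr
    _ = (2 + p) * ((2 * R) ^ j * ‖u j‖) := by rw [mul_pow]; ring

theorem EntireCoeff.hasDerivAt [CompleteSpace E] {u : ℕ → E} (hu : EntireCoeff u) (p : ℕ) (t : ℝ) :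
    HasDerivAt (fun t : ℝ => ∑' j, t ^ (2 * j + p + 1) • u j)
      (∑' j, t ^ (2 * j + p) • ((2 * j + (p + 1) : ℕ) : ℝ) • u j) t := by
  set R : ℝ := |t| + 1
  have hR : 0 ≤ R := by positivity
  refine hasDerivAt_tsum_of_isPreconnected (𝕜 := ℝ)
    (g := fun j t => t ^ (2 * j + p + 1) • u j)
    (g' := fun j t => t ^ (2 * j + p) • ((2 * j + (p + 1) : ℕ) : ℝ) • u j)
    (u := fun j => R ^ p * ((R ^ 2) ^ j * ‖((2 * j + (p + 1) : ℕ) : ℝ) • u j‖))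
    (t := Metric.ball (0 : ℝ) R) (y₀ := 0)
    (((hu.linear_smul (p + 1)) (R ^ 2) (by positivity)).mul_left _) Metric.isOpen_ball
    (convex_ball _ _).isPreconnected (fun j y _ => ?_) (fun j y hy => ?_) ?_ ?_ ?_
  · rw [smul_smul]
    have := (hasDerivAt_pow (2 * j + p + 1) y).smul_const (u j)
    convert this using 2
    rw [show 2 * j + p + 1 - 1 = 2 * j + p by omega, mul_comm]
    congr 1
  · rw [norm_smul, norm_pow, ← mul_assoc, ← pow_mul, ← pow_add, add_comm p (2 * j)]
    have : ‖y‖ ≤ R := (mem_ball_zero_iff.mp hy).le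
    gcongr
  · simp [R]; positivity
  · simp
  · simp [R]

theorem Dop_congr_Ioi {f g : ℝ → E} (h : ∀ t ∈ Ioi (0 : ℝ), f t = g t) :
    ∀ t ∈ Ioi (0 : ℝ), Dop f t = Dop g t := by
  intro t ht
  have : f =ᶠ[nhds t] g := Filter.eventually_of_mem (isOpen_Ioi.mem_nhds ht) h
  rw [Dop, Dop, this.deriv_eq]

/-- Iterates of `Dop` act termwise on series of odd powers. -/
theorem EntireCoeff.iterate_Dop [CompleteSpace E] {u : ℕ → E} (hu : EntireCoeff u) (G : ℝ → E) (m : ℕ)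
    (hG : ∀ t ∈ Ioi (0 : ℝ), G t = ∑' j, t ^ (2 * j + 2 * m + 1) • u j) (k : ℕ) (hk : k ≤ m) :
    EntireCoeff (fun j => (∏ i ∈ Finset.range k, ((2 * j + 2 * (m - i) + 1 : ℕ) : ℝ)) • u j) ∧
    ∀ t ∈ Ioi (0 : ℝ), Dop^[k] G t = ∑' j, t ^ (2 * j + 2 * (m - k) + 1) •
      (∏ i ∈ Finset.range k, ((2 * j + 2 * (m - i) + 1 : ℕ) : ℝ)) • u j := by
  induction k with
  | zero => simpa using ⟨hu, hG⟩
  | succ k ih =>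
    obtain ⟨h1, h2⟩ := ih (by omega)
    have h3 := h1.linear_smul (2 * (m - k) + 1)
    have h4 : ∀ j, (((2 * j + (2 * (m - k) + 1) : ℕ) : ℝ)) •
        (∏ i ∈ Finset.range k, ((2 * j + 2 * (m - i) + 1 : ℕ) : ℝ)) • u j =
        (∏ i ∈ Finset.range (k + 1), ((2 * j + 2 * (m - i) + 1 : ℕ) : ℝ)) • u j := by
      intro j
      rw [smul_smul, Finset.prod_range_succ, mul_comm, add_assoc]
    refine ⟨by simpa only [h4] using h3, fun t ht => ?_⟩
    rw [Function.iterate_succ_apply', Dop_congr_Ioi h2 t ht, Dop,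
      (h1.hasDerivAt (2 * (m - k)) t).deriv]
    simp only [h4]
    rw [← tsum_const_smul'']
    refine tsum_congr fun j => ?_
    rw [smul_smul]
    congr 1
    rw [show 2 * j + 2 * (m - k) = (2 * j + 2 * (m - (k + 1)) + 1) + 1 by omega, pow_succ]
    field_simp [(mem_Ioi.mp ht).ne']

end Series

section FunctionalCalculus

theorem norm_clm_pow_le {H : Type*} [NormedAddCommGroup H] [InnerProductSpace ℂ H]
    (T : H →L[ℂ] H) : ∀ k : ℕ, ‖T ^ k‖ ≤ ‖T‖ ^ k
  | 0 => by
    rw [pow_zero, pow_zero]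
    exact ContinuousLinearMap.norm_id_le
  | k + 1 => norm_pow_le' T k.succ_pos

theorem Real.hasSum_cos_mul_sqrt (t : ℝ) {x : ℝ} (hx : 0 ≤ x) :
    HasSum (fun j : ℕ => ((-1 : ℝ) ^ j * t ^ (2 * j) / (2 * j).factorial) * x ^ j)
      (Real.cos (t * √x)) := by
  convert Real.hasSum_cos (t * √x) using 2 with j
  rw [mul_pow, pow_mul √x, Real.sq_sqrt hx]
  ring

theorem cfc_cos_mul_sqrt_hasSum {H : Type*} [NormedAddCommGroup H] [InnerProductSpace ℂ H]
    [CompleteSpace H] (S : H →L[ℂ] H) (hS : 0 ≤ S) (t : ℝ) :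
    HasSum (fun j : ℕ => ((-1 : ℝ) ^ j * t ^ (2 * j) / (2 * j).factorial) • S ^ j)
      (cfc (fun x : ℝ => Real.cos (t * √x)) S) := by
  have hsa : IsSelfAdjoint S := .of_nonneg hS
  set a : ℕ → ℝ := fun j => (-1 : ℝ) ^ j * t ^ (2 * j) / (2 * j).factorial with ha
  have hpoly : ∀ s : Finset ℕ, ∑ j ∈ s, a j • S ^ j = cfc (fun x : ℝ => ∑ j ∈ s, a j * x ^ j) S := by
    intro s
    have := cfc_sum (fun (j : ℕ) (x : ℝ) => a j * x ^ j) S s (fun j _ => by fun_prop)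
    rw [show (fun x : ℝ => ∑ j ∈ s, a j * x ^ j) = ∑ j ∈ s, fun x : ℝ => a j * x ^ j by
      ext x; simp, this]
    refine Finset.sum_congr rfl fun j _ => ?_
    rw [cfc_const_mul (a j) (fun x : ℝ => x ^ j) S, cfc_pow_id S j]
  rw [HasSum, funext hpoly]
  refine tendsto_cfc_fun ?_ (.of_forall fun s => (by fun_prop : Continuous _).continuousOn)
  obtain ⟨R, hR⟩ := (spectrum.isBounded (𝕜 := ℝ) S).exists_norm_le
  have hu : Summable fun j : ℕ => (|t| * √|R|) ^ (2 * j) / (2 * j).factorial :=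
    (Real.summable_pow_div_factorial (|t| * √|R|)).comp_injective
      (mul_right_injective₀ two_ne_zero)
  have := tendstoUniformlyOn_tsum (f := fun (j : ℕ) (x : ℝ) => a j * x ^ j) hu
    (s := spectrum ℝ S) fun j x hx => by
      have hxR : |x| ≤ |R| := (hR x hx).trans (le_abs_self R)
      rw [mul_pow, pow_mul √|R|, Real.sq_sqrt (abs_nonneg R)]
      simp only [ha, Real.norm_eq_abs, abs_mul, abs_div, abs_pow, abs_neg, abs_one, one_pow,
        one_mul, Nat.abs_cast]
      rw [div_mul_eq_mul_div]
      gcongr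
  refine this.congr_right fun x hx => ?_
  exact (Real.hasSum_cos_mul_sqrt t (spectrum_nonneg_of_nonneg hS hx)).tsum_eq

end FunctionalCalculus

section Main

/-- The coefficients of the series of the spherical mean of a product of operator cosines. -/
noncomputable def sphericalCosCoeff (m j : ℕ) : ℝ :=
  (-1) ^ j * 2 * π ^ m * 4 ^ m * (j + m).factorial / ((2 * (j + m)).factorial * j.factorial)

theorem abs_sphericalCosCoeff_le (m j : ℕ) :
    |sphericalCosCoeff m j| ≤ 2 * π ^ m * 4 ^ m / j.factorial := by
  have h : ((j + m).factorial : ℝ) ≤ (2 * (j + m)).factorial := by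
    exact_mod_cast Nat.factorial_le (by omega)
  have hpi := Real.pi_pos
  rw [sphericalCosCoeff]
  simp only [abs_div, abs_mul, abs_pow, abs_neg, abs_one, one_pow, one_mul, Nat.abs_cast,
    Nat.abs_ofNat, abs_of_pos hpi]
  rw [div_le_div_iff₀ (by positivity) (by positivity)]
  calc 2 * π ^ m * 4 ^ m * (j + m).factorial * j.factorial
      ≤ 2 * π ^ m * 4 ^ m * (2 * (j + m)).factorial * j.factorial := by gcongr
    _ = _ := by ring

theorem entireCoeff_sphericalCosCoeff {H : Type*} [NormedAddCommGroup H] [InnerProductSpace ℂ H]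
    (m : ℕ) (S : H →L[ℂ] H) : EntireCoeff fun j => sphericalCosCoeff m j • S ^ j := by
  intro R hR
  refine Summable.of_nonneg_of_le (fun j => by positivity) (fun j => ?_)
    ((Real.summable_pow_div_factorial (R * ‖S‖)).mul_left (2 * π ^ m * 4 ^ m))
  rw [norm_smul, Real.norm_eq_abs]
  calc R ^ j * (|sphericalCosCoeff m j| * ‖S ^ j‖)
      ≤ R ^ j * ((2 * π ^ m * 4 ^ m / j.factorial) * ‖S‖ ^ j) := by
        gcongr
        exacts [abs_sphericalCosCoeff_le m j, norm_clm_pow_le S j]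
    _ = _ := by rw [mul_pow]; ring

theorem prod_odd_mul_factorial (j m : ℕ) :
    (∏ i ∈ Finset.range m, (2 * j + 2 * i + 1)) * ((2 * j).factorial * 2 ^ m * (j + m).factorial) =
      (2 * (j + m)).factorial * j.factorial := by
  induction m with
  | zero => simp
  | succ m ih =>
    rw [Finset.prod_range_succ, show 2 * (j + (m + 1)) = 2 * (j + m) + 1 + 1 by ring,
      show j + (m + 1) = j + m + 1 by ring, Nat.factorial_succ, Nat.factorial_succ,
      Nat.factorial_succ]
    calc _ = (2 * j + 2 * m + 1) * (2 * (j + m + 1)) *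
        ((∏ i ∈ Finset.range m, (2 * j + 2 * i + 1)) *
          ((2 * j).factorial * 2 ^ m * (j + m).factorial)) := by ring
      _ = _ := by rw [ih]; ring

/-- Integrating a scalar-weighted monomial of the cosine product over the sphere. -/
theorem sphere_moment_coefficient (m : ℕ) (t : ℝ) (k : Fin (2 * m + 1) → ℕ) :
    (∏ i, (-1 : ℝ) ^ k i * t ^ (2 * k i) / (2 * k i).factorial) *
      (2 * (∏ i, Real.Gamma (k i + 1 / 2)) /
        Real.Gamma ((∑ i, k i : ℕ) + ((2 * m : ℕ) + 1) / 2)) =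
    (t ^ (2 * ∑ i, k i) * ((∑ i, k i).factorial * sphericalCosCoeff m (∑ i, k i))) *
      ∏ i, ((k i).factorial : ℝ)⁻¹ := by
  set j := ∑ i, k i with hj
  have h1 : (∏ i, (-1 : ℝ) ^ k i * t ^ (2 * k i) / (2 * k i).factorial) *
      (∏ i, Real.Gamma (k i + 1 / 2)) =
      (-1) ^ j * t ^ (2 * j) * √π ^ (2 * m + 1) / 4 ^ j * ∏ i, ((k i).factorial : ℝ)⁻¹ := by
    rw [← Finset.prod_mul_distrib]
    have : ∀ i, (-1 : ℝ) ^ k i * t ^ (2 * k i) / (2 * k i).factorial *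
        Real.Gamma (k i + 1 / 2) =
        ((-t ^ 2 / 4) ^ k i * √π) * ((k i).factorial : ℝ)⁻¹ := by
      intro i
      rw [Real.Gamma_nat_add_half_eq_factorial, div_pow, neg_pow (t ^ 2), pow_mul]
      field_simp
    simp only [this]
    rw [Finset.prod_mul_distrib, Finset.prod_mul_distrib, Finset.prod_pow_eq_pow_sum, ← hj,
      Finset.prod_const, Finset.card_univ, Fintype.card_fin, div_pow, neg_pow (t ^ 2), pow_mul]
    ring
  have h2 : (j : ℝ) + ((2 * m : ℕ) + 1) / 2 = ((j + m : ℕ) : ℝ) + 1 / 2 := by push_cast; ring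
  have hpi : √π ^ (2 * m + 1) = π ^ m * √π := by
    rw [pow_succ, pow_mul, Real.sq_sqrt Real.pi_pos.le]
  rw [h2, Real.Gamma_nat_add_half_eq_factorial, mul_div_assoc', mul_left_comm, h1, hpi,
    sphericalCosCoeff]
  have : √π ≠ 0 := by positivity
  rw [pow_add]
  field_simp

theorem hasSum_integral_prod_cosOp {H : Type*} [NormedAddCommGroup H] [InnerProductSpace ℂ H]
    [CompleteSpace H] (m : ℕ) (A : Fin (2 * m + 1) → (H →L[ℂ] H))
    (hcomm : ∀ i j, Commute (A i) (A j)) (t : ℝ) :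
    HasSum (fun j : ℕ => t ^ (2 * j) • sphericalCosCoeff m j • (∑ i, A i ^ 2) ^ j)
      (∫ ω : Metric.sphere (0 : EuclideanSpace ℝ (Fin (2 * m + 1))) 1,
        (List.ofFn (fun i : Fin (2 * m + 1) =>
          cosOp (t * (ω : EuclideanSpace ℝ (Fin (2 * m + 1))) i) (A i))).prod
        ∂((volume : Measure (EuclideanSpace ℝ (Fin (2 * m + 1)))).toSphere)) := by
  set σ := (volume : Measure (EuclideanSpace ℝ (Fin (2 * m + 1)))).toSphere
  have hsum : ∀ (s : ℝ) (T : H →L[ℂ] H),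
      Summable fun k : ℕ => ‖(s ^ (2 * k) / (2 * k).factorial) • T ^ (2 * k)‖ := by
    intro s T
    refine Summable.of_nonneg_of_le (fun k => norm_nonneg _) (fun k => ?_)
      ((Real.summable_pow_div_factorial (|s| * ‖T‖)).comp_injective
        (mul_right_injective₀ (two_ne_zero (α := ℕ))))
    rw [norm_smul, Real.norm_eq_abs, abs_div, abs_pow, Nat.abs_cast, Function.comp_apply, mul_pow,
      mul_div_right_comm]
    gcongr
    exact norm_clm_pow_le T _
  have hsum' : ∀ (s : ℝ) (T : H →L[ℂ] H),
      Summable fun k : ℕ => ‖((-1) ^ k * s ^ (2 * k) / (2 * k).factorial) • T ^ (2 * k)‖ := by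
    intro s T
    refine (hsum s T).congr fun k => ?_
    simp [norm_smul]
  set P : (Fin (2 * m + 1) → ℕ) → (H →L[ℂ] H) :=
    fun k => (List.ofFn fun i => A i ^ (2 * k i)).prod
  set c : (Fin (2 * m + 1) → ℕ) → ℝ :=
    fun k => ∏ i, (-1 : ℝ) ^ k i * t ^ (2 * k i) / (2 * k i).factorial
  set M : (Fin (2 * m + 1) → ℕ) → Metric.sphere (0 : EuclideanSpace ℝ (Fin (2 * m + 1))) 1 → ℝ :=
    fun k ω => ∏ i, (ω : EuclideanSpace ℝ (Fin (2 * m + 1))) i ^ (2 * k i)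
  have hM_cont : ∀ k, Continuous (M k) := fun k => by
    simp only [M]
    fun_prop
  have hM_le : ∀ k ω, ‖M k ω‖ ≤ 1 := by
    intro k ω
    simp only [M]
    rw [norm_prod]
    refine Finset.prod_le_one (fun i _ => norm_nonneg _) fun i _ => ?_
    rw [norm_pow]
    refine pow_le_one₀ (norm_nonneg _) ?_
    exact (PiLp.norm_apply_le _ i).trans_eq (norm_eq_of_mem_sphere ω)
  have hterm : ∀ k (ω : Metric.sphere (0 : EuclideanSpace ℝ (Fin (2 * m + 1))) 1), (List.ofFn fun i =>
      (((-1) ^ k i * (t * (ω : EuclideanSpace ℝ (Fin (2 * m + 1))) i) ^ (2 * k i) /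
        (2 * k i).factorial : ℝ)) • A i ^ (2 * k i)).prod = M k ω • c k • P k := by
    intro k ω
    rw [List.prod_ofFn_smul, smul_smul, ← Finset.prod_mul_distrib]
    congr 1
    refine Finset.prod_congr rfl fun i _ => ?_
    rw [mul_pow]
    ring
  have hM_int : ∀ k, Integrable (M k) σ := fun k =>
    (integrable_const (1 : ℝ)).mono' (hM_cont k).aestronglyMeasurable (.of_forall (hM_le k))
  have hmain := hasSum_integral_of_summable_integral_norm (μ := σ)
    (F := fun k ω => M k ω • c k • P k) (fun k => (hM_int k).smul_const _) (by
      have h1 : Summable fun k => ‖c k • P k‖ :=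
        (summable_norm_and_hasSum_prod_ofFn
          (fun i k => ((-1) ^ k * t ^ (2 * k) / (2 * k).factorial : ℝ) • A i ^ (2 * k))
          fun i => hsum' t (A i)).1.congr fun k => by rw [List.prod_ofFn_smul]
      refine Summable.of_nonneg_of_le (fun k => integral_nonneg fun ω => norm_nonneg _)
        (fun k => ?_) (h1.mul_left (σ.real Set.univ))
      refine le_of_le_of_eq ?_ (integral_const (μ := σ) ‖c k • P k‖)
      refine integral_mono_of_nonneg (.of_forall fun ω => norm_nonneg _) (integrable_const _)
        (.of_forall fun ω => ?_)
      simp only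
      rw [norm_smul]
      exact mul_le_of_le_one_left (norm_nonneg _) (hM_le k ω))
  have hprod : ∀ ω : Metric.sphere (0 : EuclideanSpace ℝ (Fin (2 * m + 1))) 1,
      ∑' k, M k ω • c k • P k = (List.ofFn fun i : Fin (2 * m + 1) =>
          cosOp (t * (ω : EuclideanSpace ℝ (Fin (2 * m + 1))) i) (A i)).prod := by
    intro ω
    simp only [← hterm]
    exact (summable_norm_and_hasSum_prod_ofFn
      (fun i k => ((-1) ^ k * (t * (ω : EuclideanSpace ℝ (Fin (2 * m + 1))) i) ^ (2 * k) /
        (2 * k).factorial : ℝ) • A i ^ (2 * k)) fun i => hsum' _ (A i)).2.tsum_eq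
  simp only [hprod] at hmain
  have hcoef : ∀ k, ∫ ω, M k ω • c k • P k ∂σ =
      (t ^ (2 * ∑ i, k i) * ((∑ i, k i).factorial * sphericalCosCoeff m (∑ i, k i))) •
        (List.ofFn fun i => ((k i).factorial : ℝ)⁻¹ • (A i ^ 2) ^ k i).prod := by
    intro k
    rw [integral_smul_const, List.prod_ofFn_smul, smul_smul, smul_smul,
      ← sphere_moment_coefficient, integral_sphere_prod_pow_two_mul, mul_comm]
    simp only [← pow_mul]
    rfl
  simp only [hcoef] at hmain
  rw [← (Finset.Nat.sigmaAntidiagonalTupleEquivTuple (2 * m + 1)).hasSum_iff] at hmain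
  refine hmain.sigma fun j => ?_
  have h : t ^ (2 * j) • sphericalCosCoeff m j • (∑ i, A i ^ 2) ^ j =
      ∑ k : Finset.Nat.antidiagonalTuple (2 * m + 1) j,
        (t ^ (2 * j) * (j.factorial * sphericalCosCoeff m j)) •
          (List.ofFn fun i => ((k.1 i).factorial : ℝ)⁻¹ • (A i ^ 2) ^ k.1 i).prod := by
    rw [← Finset.smul_sum, Finset.sum_coe_sort (Finset.Nat.antidiagonalTuple (2 * m + 1) j)
      fun k => (List.ofFn fun i => ((k i).factorial : ℝ)⁻¹ • (A i ^ 2) ^ k i).prod,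
      sum_antidiagonalTuple_prod_ofFn_pow _ fun i l => (hcomm i l).pow_pow 2 2, smul_smul,
      smul_smul]
    congr 1
    field_simp
  rw [h]
  convert hasSum_fintype _ using 1
  refine Finset.sum_congr rfl fun k _ => ?_
  simp [Finset.Nat.mem_antidiagonalTuple.mp k.2]

end Main

theorem stmt2 {H : Type*} [NormedAddCommGroup H] [InnerProductSpace ℂ H] [CompleteSpace H]
    (m : ℕ) (hm : 1 ≤ m) (A : Fin (2*m+1) → (H →L[ℂ] H))
    (hsa : ∀ i, IsSelfAdjoint (A i))
    (hcomm : ∀ i j, Commute (A i) (A j))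
    (G : ℝ → (H →L[ℂ] H))
    (hG : ∀ t : ℝ, G t = t ^ (2*m-1) •
      ∫ ω : Metric.sphere (0 : EuclideanSpace ℝ (Fin (2*m+1))) 1,
        (List.ofFn (fun i : Fin (2*m+1) =>
          cosOp (t * (ω : EuclideanSpace ℝ (Fin (2*m+1))) i) (A i))).prod
        ∂((volume : Measure (EuclideanSpace ℝ (Fin (2*m+1)))).toSphere)) :
    (∀ k < m, ∀ t ∈ Set.Ioi (0:ℝ), DifferentiableAt ℝ (Dop^[k] G) t) ∧
    ∀ t ∈ Set.Ioi (0:ℝ),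
      cfc (fun x : ℝ => Real.cos (t * Real.sqrt x)) (∑ i, (A i)^2) =
        (1 / (2 * (2*π)^m)) • deriv (Dop^[m-1] G) t := by
  set S := ∑ i, A i ^ 2
  have hS : 0 ≤ S := Finset.sum_nonneg fun i _ => (hsa i).sq_nonneg
  have hG' : ∀ t ∈ Set.Ioi (0 : ℝ),
      G t = ∑' j, t ^ (2 * j + 2 * (m - 1) + 1) • sphericalCosCoeff m j • S ^ j := by
    intro t _
    rw [hG, ← (hasSum_integral_prod_cosOp m A hcomm t).tsum_eq, ← tsum_const_smul'']
    refine tsum_congr fun j => ?_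
    rw [smul_smul, ← pow_add]
    congr 2
    omega
  have hiter := (entireCoeff_sphericalCosCoeff m S).iterate_Dop G (m - 1) hG'
  have hderiv : ∀ k < m, ∀ t ∈ Set.Ioi (0 : ℝ), HasDerivAt (Dop^[k] G) _ t := fun k hk t ht =>
    ((hiter k (by omega)).1.hasDerivAt (2 * (m - 1 - k)) t).congr_of_eventuallyEq
      (Filter.eventually_of_mem (isOpen_Ioi.mem_nhds ht) (hiter k (by omega)).2)
  refine ⟨fun k hk t ht => (hderiv k hk t ht).differentiableAt, fun t ht => ?_⟩
  rw [(hderiv (m - 1) (by omega) t ht).deriv, ← (cfc_cos_mul_sqrt_hasSum S hS t).tsum_eq,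
    ← tsum_const_smul'']
  refine tsum_congr fun j => ?_
  simp only [smul_smul]
  congr 1
  have hodd : ((2 * j + (2 * (m - 1 - (m - 1)) + 1) : ℕ) : ℝ) *
      (∏ i ∈ Finset.range (m - 1), ((2 * j + 2 * (m - 1 - i) + 1 : ℕ) : ℝ)) =
      ∏ i ∈ Finset.range m, ((2 * j + 2 * i + 1 : ℕ) : ℝ) := by
    obtain ⟨l, rfl⟩ : ∃ l, m = l + 1 := ⟨m - 1, by omega⟩
    rw [← Finset.prod_range_reflect _ (l + 1), Finset.prod_range_succ, mul_comm]
    simp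
  have hfact : (∏ i ∈ Finset.range m, ((2 * j + 2 * i + 1 : ℕ) : ℝ)) *
      ((2 * j).factorial * 2 ^ m * (j + m).factorial) =
      (2 * (j + m)).factorial * j.factorial := by
    exact_mod_cast prod_odd_mul_factorial j m
  rw [← hodd] at hfact
  generalize ((2 * j + (2 * (m - 1 - (m - 1)) + 1) : ℕ) : ℝ) = x at *
  generalize (∏ i ∈ Finset.range (m - 1), ((2 * j + 2 * (m - 1 - i) + 1 : ℕ) : ℝ)) = y at *
  have h4 : (4 : ℝ) ^ m = 2 ^ m * 2 ^ m := by rw [← mul_pow]; norm_num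
  rw [sphericalCosCoeff, ← hfact, h4, mul_pow]
  have hxy : x * y ≠ 0 := fun h => by
    rw [h, zero_mul] at hfact
    exact (by positivity : ((2 * (j + m)).factorial * j.factorial : ℝ) ≠ 0) hfact.symm
  have hx := left_ne_zero_of_mul hxy
  have hy := right_ne_zero_of_mul hxy
  simp only [Nat.sub_self, mul_zero, add_zero]
  field_simp
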